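/- arXiv:1501.07613 — 2 statements merged into one kernel-verified Lean document; each statement's English description precedes it below -/
import Mathlib

section
/- Let B be a σ-unital C*-algebra and A a C*-algebra. If there exists a complete order isomorphism φ : B → A (a linear bijection such that for every n ≥ 1 the entrywise maps φ ⊗ idₙ : Mₙ(B) → Mₙ(A) and φ⁻¹ ⊗ idₙ : Mₙ(A) → Mₙ(B) send positive elements to positive elements), then A and B are *-isomorphic as C*-algebras. -/
/-!
Pull the product of `A` back along `φ` to a product `x ∘ y = φ⁻¹ (φ x * φ y)` on `B`. Positive
matrices are Gram matrices, and linear relations between vectors can be read off their Gram matrix.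
Multiplying the last of these vectors by `a : A` therefore preserves the relations between the
others, which shows that `x ↦ φ⁻¹ (φ x * a)` is a left `B`-module map. Hence
`(x * e) ∘ (e * y) = x * k * y`, where `e` is strictly positive and `k = e ∘ e`. If `s` is the
square root of `k`, the maps `b ↦ s * b * s` and `b ↦ φ (e * b * e)` are both multiplicative for
the product `x * k * y` on `B`. They have dense ranges and comparable norms, so
`s * b * s ↦ φ (e * b * e)` extends to a ⋆-isomorphism.
-/

open scoped Matrix

section DenseRange

variable {M : Type*} [Semigroup M] [TopologicalSpace M]

theorem denseRange_mul_left_of_mul {s t : M} (h : DenseRange (s * t * · : M → M)) :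
    DenseRange (s * · : M → M) := by
  refine h.mono ?_
  rintro _ ⟨b, rfl⟩
  exact ⟨t * b, (mul_assoc s t b).symm⟩

variable [ContinuousMul M]

theorem denseRange_mul_left_mul {s t : M} (hs : DenseRange (s * · : M → M))
    (ht : DenseRange (t * · : M → M)) : DenseRange (s * t * · : M → M) := by
  simpa only [Function.comp_def, mul_assoc] using hs.comp ht (continuous_const_mul s)

theorem denseRange_conj [StarMul M] [ContinuousStar M] {s : M} (hs : IsSelfAdjoint s)
    (h : DenseRange (s * · : M → M)) : DenseRange (s * · * s : M → M) := by
  have hstar : DenseRange (star : M → M) := star_involutive.surjective.denseRange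
  have hright : DenseRange (· * s : M → M) := by
    simpa only [Function.comp_def, star_mul, star_star, hs.star_eq] using
      hstar.comp (h.comp hstar (continuous_const_mul s)) continuous_star
  exact hright.comp h (continuous_mul_const s)

end DenseRange

theorem exists_starAlgEquiv_of_denseRange {𝕜 E A B : Type*} [NormedField 𝕜]
    [AddCommGroup E] [Module 𝕜 E]
    [NonUnitalNormedRing A] [NormedSpace 𝕜 A] [StarRing A] [ContinuousStar A] [CompleteSpace A]
    [NonUnitalNormedRing B] [NormedSpace 𝕜 B] [StarRing B] [ContinuousStar B] [CompleteSpace B]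
    {P : E →ₗ[𝕜] B} {Q : E →ₗ[𝕜] A} (hP : DenseRange P) (hQ : DenseRange Q)
    (hQP : ∃ C, ∀ x, ‖Q x‖ ≤ C * ‖P x‖) (hPQ : ∃ C, ∀ x, ‖P x‖ ≤ C * ‖Q x‖)
    {m : E → E → E} (hPm : ∀ x y, P (m x y) = P x * P y) (hQm : ∀ x y, Q (m x y) = Q x * Q y)
    {σ : E → E} (hPσ : ∀ x, P (σ x) = star (P x)) (hQσ : ∀ x, Q (σ x) = star (Q x)) :
    ∃ θ : B ≃⋆ₐ[𝕜] A, ∀ x, θ (P x) = Q x := by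
  let θ : B ≃L[𝕜] A := (LinearEquiv.refl 𝕜 E).extend P Q hP hQP hQ hPQ
  have hθ (x : E) : θ (P x) = Q x :=
    (LinearEquiv.refl 𝕜 E).extend_eq P Q hP hQP hQ hPQ x
  have map_mul (x y : B) : θ (x * y) = θ x * θ y :=
    hP.induction_on₂ (isClosed_eq (by fun_prop) (by fun_prop))
      (fun x y => by rw [← hPm, hθ, hθ, hθ, hQm]) x y
  have map_star (x : B) : θ (star x) = star (θ x) :=
    hP.induction_on x (isClosed_eq (by fun_prop) (by fun_prop))
      fun x => by rw [← hPσ, hθ, hθ, hQσ]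
  exact ⟨{ θ.toLinearEquiv with map_mul' := map_mul, map_star' := map_star }, hθ⟩

section CStarRing

variable {B : Type*} [NonUnitalNormedRing B] [StarRing B] [CStarRing B]

theorem norm_le_sqrt_mul_norm {A : Type*} [NonUnitalNormedRing A] [StarRing A] [CStarRing A]
    {x : A} {y : B} {C : ℝ} (h : ‖x * star x‖ ≤ C * ‖y * star y‖) : ‖x‖ ≤ √C * ‖y‖ := by
  rw [CStarRing.norm_self_mul_star, CStarRing.norm_self_mul_star] at h
  rw [← Real.sqrt_mul_self (norm_nonneg x), ← Real.sqrt_mul_self (norm_nonneg y),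
    ← Real.sqrt_mul' _ (mul_self_nonneg _)]
  exact Real.sqrt_le_sqrt h

theorem norm_conj_le_of_norm_mul_le {p q : B} (hp : IsSelfAdjoint p) (hq : IsSelfAdjoint q)
    {C : ℝ} (hC : 0 ≤ C) (h : ∀ z, ‖z * p‖ ≤ C * ‖z * q‖) (z : B) :
    ‖p * z * p‖ ≤ C * C * ‖q * z * q‖ := by
  have norm_mul_mul_comm {u v : B} (hu : IsSelfAdjoint u) (hv : IsSelfAdjoint v) (w : B) :
      ‖u * w * v‖ = ‖v * star w * u‖ := by
    rw [← norm_star]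
    simp only [star_mul, hu.star_eq, hv.star_eq, mul_assoc]
  calc ‖p * z * p‖ ≤ C * ‖p * z * q‖ := h _
    _ = C * ‖q * star z * p‖ := by rw [norm_mul_mul_comm hp hq]
    _ ≤ C * (C * ‖q * star z * q‖) := by gcongr; exact h _
    _ = C * C * ‖q * z * q‖ := by rw [norm_mul_mul_comm hq hq, star_star, ← mul_assoc C C]

variable [PartialOrder B] [StarOrderedRing B] {m n : Type*} [Fintype m] [Fintype n]

theorem eq_zero_of_dotProduct_self_star {v : n → B} (h : v ⬝ᵥ star v = 0) : v = 0 := by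
  have hv := (Fintype.sum_eq_zero_iff_of_nonneg fun i => mul_star_self_nonneg (v i)).1 h
  exact funext fun i => (CStarRing.mul_star_self_eq_zero_iff (v i)).1 (congrFun hv i)

theorem vecMul_conjTranspose_mul_self_eq_zero {K : Matrix m n B} {c : n → B}
    (h : c ᵥ* (Kᴴ * K) ⬝ᵥ star c = 0) : c ᵥ* (Kᴴ * K) = 0 := by
  have hc : c ᵥ* Kᴴ = 0 := by
    apply eq_zero_of_dotProduct_self_star
    rwa [Matrix.star_vecMul, Matrix.conjTranspose_conjTranspose, Matrix.dotProduct_mulVec,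
      Matrix.vecMul_vecMul]
  rw [← Matrix.vecMul_vecMul, hc, Matrix.zero_vecMul]

end CStarRing

section CStarAlgebra

variable {A B : Type*} [NonUnitalCStarAlgebra A] [NonUnitalCStarAlgebra B]

/-- `n`-positive linear maps between C⋆-algebras. Positivity in the matrix algebra is expressed
as being of the form `star N * N`. -/
def IsNPositive (n : ℕ) (φ : B →ₗ[ℂ] A) : Prop :=
  ∀ M : Matrix (Fin n) (Fin n) B, (∃ N : Matrix (Fin n) (Fin n) B, M = star N * N) →
    ∃ N' : Matrix (Fin n) (Fin n) A, M.map φ = star N' * N'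

/-- `n`-order isomorphisms between C⋆-algebras: linear bijections that are `n`-positive together
with their inverse. A complete order isomorphism is an `n`-order isomorphism for all `n`. -/
structure IsNOrderIso (n : ℕ) (φ : B ≃ₗ[ℂ] A) : Prop where
  isNPositive : IsNPositive n (φ : B →ₗ[ℂ] A)
  isNPositive_symm : IsNPositive n (φ.symm : A →ₗ[ℂ] B)

namespace IsNPositive

variable {n : ℕ} [NeZero n] {φ : B →ₗ[ℂ] A}

theorem exists_gram (hφ : IsNPositive n φ) (r : Fin n → B) :
    ∃ N : Matrix (Fin n) (Fin n) A, ∀ i j, φ (star (r i) * r j) = (Nᴴ * N) i j := by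
  let R : Matrix (Fin n) (Fin n) B := Matrix.updateRow 0 0 r
  have hR (i j : Fin n) : (star R * R) i j = star (r i) * r j := by
    rw [Matrix.mul_apply, Finset.sum_eq_single 0]
    · simp [R, Matrix.star_apply]
    · intro k _ hk
      simp [R, hk]
    · simp
  obtain ⟨N, hN⟩ := hφ (star R * R) ⟨R, rfl⟩
  refine ⟨N, fun i j => ?_⟩
  rw [← hR, ← Matrix.star_eq_conjTranspose, ← hN, Matrix.map_apply]

theorem map_nonneg [PartialOrder A] [StarOrderedRing A] [PartialOrder B] [StarOrderedRing B]
    (hφ : IsNPositive n φ) {x : B} (hx : 0 ≤ x) : 0 ≤ φ x := by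
  obtain ⟨w, rfl⟩ := CStarAlgebra.nonneg_iff_eq_star_mul_self.1 hx
  obtain ⟨N, hN⟩ := hφ.exists_gram fun _ => w
  rw [hN 0 0, Matrix.mul_apply]
  exact Finset.sum_nonneg fun i _ => star_mul_self_nonneg (N i 0)

/-- The positive linear map underlying an `n`-positive map; it gives access to the automatic
continuity of positive maps. -/
def toPositiveLinearMap [PartialOrder A] [StarOrderedRing A] [PartialOrder B] [StarOrderedRing B]
    (hφ : IsNPositive n φ) : B →ₚ[ℂ] A :=
  PositiveLinearMap.mk₀ φ fun _ => hφ.map_nonneg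

end IsNPositive

namespace IsNOrderIso

theorem symm {n : ℕ} {φ : B ≃ₗ[ℂ] A} (h : IsNOrderIso n φ) : IsNOrderIso n φ.symm :=
  ⟨h.isNPositive_symm, h.isNPositive⟩

section Gram

variable {n : ℕ} {φ : B ≃ₗ[ℂ] A}

theorem exists_gram_symm_map_mul (h : IsNOrderIso (n + 1) φ) (x : Fin n → B) (y : B) (a : A) :
    ∃ K : Matrix (Fin (n + 1)) (Fin (n + 1)) B,
      (∀ i j : Fin n, (Kᴴ * K) i.castSucc j.castSucc = x i * star (x j)) ∧
      ∀ i : Fin n, (Kᴴ * K) i.castSucc (Fin.last n) = φ.symm (φ (x i * y) * a) := by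
  obtain ⟨N, hN⟩ := h.isNPositive.exists_gram (Fin.snoc (α := fun _ => B) (star x) y)
  let N' := N.updateCol (Fin.last n) fun k => N k (Fin.last n) * a
  obtain ⟨K, hK⟩ := h.isNPositive_symm (star N' * N') ⟨N', rfl⟩
  have hK' (i j : Fin (n + 1)) : (Kᴴ * K) i j = φ.symm ((N'ᴴ * N') i j) :=
    (congrFun₂ hK i j).symm
  refine ⟨K, fun i j => ?_, fun i => ?_⟩
  · have hij : (N'ᴴ * N') i.castSucc j.castSucc = (Nᴴ * N) i.castSucc j.castSucc := by
      simp [Matrix.mul_apply, N', Fin.castSucc_ne_last]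
    rw [hK', hij, ← hN]
    simp
  · have hi : (N'ᴴ * N') i.castSucc (Fin.last n) = (Nᴴ * N) i.castSucc (Fin.last n) * a := by
      simp [Matrix.mul_apply, N', Fin.castSucc_ne_last, Finset.sum_mul, mul_assoc]
    rw [hK', hi, ← hN]
    simp

theorem sum_mul_symm_map_mul_eq_zero [PartialOrder B] [StarOrderedRing B]
    (h : IsNOrderIso (n + 1) φ) {c x : Fin n → B} (hcx : ∑ i, c i * x i = 0) (y : B) (a : A) :
    ∑ i, c i * φ.symm (φ (x i * y) * a) = 0 := by
  obtain ⟨K, hK, hK_last⟩ := h.exists_gram_symm_map_mul x y a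
  let c₀ : Fin (n + 1) → B := Fin.snoc (α := fun _ => B) c 0
  have vecMul_apply (j : Fin (n + 1)) :
      (c₀ ᵥ* (Kᴴ * K)) j = ∑ i : Fin n, c i * (Kᴴ * K) i.castSucc j := by
    simp [c₀, Matrix.vecMul, dotProduct, Fin.sum_univ_castSucc]
  have vecMul_castSucc (j : Fin n) : (c₀ ᵥ* (Kᴴ * K)) j.castSucc = 0 := by
    simp only [vecMul_apply, hK, ← mul_assoc, ← Finset.sum_mul, hcx, zero_mul]
  have hc₀ : c₀ ᵥ* (Kᴴ * K) ⬝ᵥ star c₀ = 0 := by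
    rw [dotProduct, Fin.sum_univ_castSucc]
    simp [vecMul_castSucc, c₀]
  have := congrFun (vecMul_conjTranspose_mul_self_eq_zero hc₀) (Fin.last n)
  simpa only [vecMul_apply, hK_last, Pi.zero_apply] using this

end Gram

section Module

variable [PartialOrder B] [StarOrderedRing B] {φ : B ≃ₗ[ℂ] A}

theorem symm_map_mul_mul (h : IsNOrderIso 3 φ) (b z : B) (a : A) :
    φ.symm (φ (b * z) * a) = b * φ.symm (φ z * a) := by
  let T : B →ₗ[ℂ] B := φ.symm ∘ₗ LinearMap.mulRight ℂ a ∘ₗ φ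
  have on_products (d u y : B) : d * T (b * u * y) = d * (b * T (u * y)) := by
    have := h.sum_mul_symm_map_mul_eq_zero (c := ![d, -(d * b)]) (x := ![b * u, u])
      (by simp [Fin.sum_univ_two, mul_assoc]) y a
    simpa [Fin.sum_univ_two, T, mul_assoc, ← sub_eq_add_neg, sub_eq_zero] using this
  have on_nonneg {x : B} (hx : 0 ≤ x) : T (b * x) = b * T x := by
    obtain ⟨w, rfl⟩ := CStarAlgebra.nonneg_iff_eq_star_mul_self.1 hx
    rw [← mul_assoc, ← sub_eq_zero, ← CStarRing.star_mul_self_eq_zero_iff, mul_sub, sub_eq_zero]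
    exact on_products _ _ _
  have hT : T ∘ₗ LinearMap.mulLeft ℂ b = LinearMap.mulLeft ℂ b ∘ₗ T :=
    LinearMap.ext_on CStarAlgebra.span_nonneg fun _ hx => on_nonneg hx
  exact LinearMap.congr_fun hT z

variable [PartialOrder A] [StarOrderedRing A]

theorem exists_norm_map_le {n : ℕ} [NeZero n] (h : IsNOrderIso n φ) :
    ∃ C : ℝ, 0 ≤ C ∧ ∀ b, ‖φ b‖ ≤ C * ‖b‖ := by
  obtain ⟨C, hC⟩ := h.isNPositive.toPositiveLinearMap.exists_norm_apply_le
  exact ⟨C, C.coe_nonneg, hC⟩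

theorem continuous {n : ℕ} [NeZero n] (h : IsNOrderIso n φ) : Continuous φ :=
  map_continuous h.isNPositive.toPositiveLinearMap

protected theorem map_star {n : ℕ} [NeZero n] (h : IsNOrderIso n φ) (b : B) :
    φ (star b) = star (φ b) :=
  map_star h.isNPositive.toPositiveLinearMap b

theorem symm_mul_map_mul (h : IsNOrderIso 3 φ) (a : A) (z b : B) :
    φ.symm (a * φ (z * b)) = φ.symm (a * φ z) * b := by
  have := congrArg star (h.symm_map_mul_mul (star b) (star z) (star a))
  simpa only [← h.symm.map_star, star_mul, star_star, ← h.map_star] using this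

theorem map_mul_mul_map_mul (h : IsNOrderIso 3 φ) (x e y : B) :
    φ (x * e) * φ (e * y) = φ (x * φ.symm (φ e * φ e) * y) := by
  apply φ.symm.injective
  rw [h.symm_map_mul_mul, h.symm_mul_map_mul, φ.symm_apply_apply, mul_assoc]

section Compression

variable {e s : B}

theorem map_mul_mul_star_self (h : IsNOrderIso 3 φ) (he : IsSelfAdjoint e) (hs : IsSelfAdjoint s)
    (hse : s * s = φ.symm (φ e * φ e)) (z : B) :
    φ (z * s * star (z * s)) = φ (z * e) * star (φ (z * e)) := by
  rw [← h.map_star, star_mul, star_mul, he.star_eq, hs.star_eq, h.map_mul_mul_map_mul, ← hse]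
  simp only [mul_assoc]

theorem exists_norm_mul_sqrt_le_norm_mul (h : IsNOrderIso 3 φ) (he : IsSelfAdjoint e)
    (hs : IsSelfAdjoint s) (hse : s * s = φ.symm (φ e * φ e)) :
    ∃ C, 0 ≤ C ∧ ∀ z, ‖z * s‖ ≤ C * ‖z * e‖ := by
  obtain ⟨D, hD₀, hD⟩ := h.exists_norm_map_le
  obtain ⟨D', -, hD'⟩ := h.symm.exists_norm_map_le
  refine ⟨√D' * D, by positivity, fun z => ?_⟩
  calc ‖z * s‖ ≤ √D' * ‖φ (z * e)‖ := norm_le_sqrt_mul_norm <| by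
        simpa only [← h.map_mul_mul_star_self he hs hse, φ.symm_apply_apply] using
          hD' (φ (z * e) * star (φ (z * e)))
    _ ≤ √D' * (D * ‖z * e‖) := by gcongr; exact hD _
    _ = √D' * D * ‖z * e‖ := (mul_assoc _ _ _).symm

theorem exists_norm_mul_le_norm_mul_sqrt (h : IsNOrderIso 3 φ) (he : IsSelfAdjoint e)
    (hs : IsSelfAdjoint s) (hse : s * s = φ.symm (φ e * φ e)) :
    ∃ C, 0 ≤ C ∧ ∀ z, ‖z * e‖ ≤ C * ‖z * s‖ := by
  obtain ⟨D, -, hD⟩ := h.exists_norm_map_le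
  obtain ⟨D', hD'₀, hD'⟩ := h.symm.exists_norm_map_le
  refine ⟨D' * √D, by positivity, fun z => ?_⟩
  calc ‖z * e‖ ≤ D' * ‖φ (z * e)‖ := by simpa only [φ.symm_apply_apply] using hD' (φ (z * e))
    _ ≤ D' * (√D * ‖z * s‖) := by
        gcongr
        exact norm_le_sqrt_mul_norm (h.map_mul_mul_star_self he hs hse z ▸ hD _)
    _ = D' * √D * ‖z * s‖ := (mul_assoc _ _ _).symm

theorem exists_norm_map_conj_le (h : IsNOrderIso 3 φ) (he : IsSelfAdjoint e)
    (hs : IsSelfAdjoint s) (hse : s * s = φ.symm (φ e * φ e)) :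
    ∃ C, ∀ b, ‖φ (e * b * e)‖ ≤ C * ‖s * b * s‖ := by
  obtain ⟨C, hC₀, hC⟩ := h.exists_norm_mul_le_norm_mul_sqrt he hs hse
  obtain ⟨D, hD₀, hD⟩ := h.exists_norm_map_le
  refine ⟨D * (C * C), fun b => ?_⟩
  calc ‖φ (e * b * e)‖ ≤ D * ‖e * b * e‖ := hD _
    _ ≤ D * (C * C * ‖s * b * s‖) := by gcongr; exact norm_conj_le_of_norm_mul_le he hs hC₀ hC b
    _ = D * (C * C) * ‖s * b * s‖ := (mul_assoc _ _ _).symm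

theorem exists_norm_conj_le_map (h : IsNOrderIso 3 φ) (he : IsSelfAdjoint e)
    (hs : IsSelfAdjoint s) (hse : s * s = φ.symm (φ e * φ e)) :
    ∃ C, ∀ b, ‖s * b * s‖ ≤ C * ‖φ (e * b * e)‖ := by
  obtain ⟨C, hC₀, hC⟩ := h.exists_norm_mul_sqrt_le_norm_mul he hs hse
  obtain ⟨D, -, hD⟩ := h.symm.exists_norm_map_le
  refine ⟨C * C * D, fun b => ?_⟩
  calc ‖s * b * s‖ ≤ C * C * ‖e * b * e‖ := norm_conj_le_of_norm_mul_le hs he hC₀ hC b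
    _ ≤ C * C * (D * ‖φ (e * b * e)‖) := by
        gcongr
        simpa only [φ.symm_apply_apply] using hD (φ (e * b * e))
    _ = C * C * D * ‖φ (e * b * e)‖ := (mul_assoc _ _ _).symm

theorem exists_starAlgEquiv_conj (h : IsNOrderIso 3 φ) (he : IsSelfAdjoint e)
    (hs : IsSelfAdjoint s) (hse : s * s = φ.symm (φ e * φ e))
    (hed : DenseRange (e * · : B → B)) (hsd : DenseRange (s * · : B → B)) :
    ∃ θ : B ≃⋆ₐ[ℂ] A, ∀ b, θ (s * b * s) = φ (e * b * e) := by
  let P : B →ₗ[ℂ] B := LinearMap.mulLeftRight ℂ (s, s)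
  let Q : B →ₗ[ℂ] A := φ ∘ₗ LinearMap.mulLeftRight ℂ (e, e)
  have hP (b : B) : P b = s * b * s := rfl
  have hQ (b : B) : Q b = φ (e * b * e) := rfl
  have hPd : DenseRange P := by simpa only [← hP] using denseRange_conj hs hsd
  have hQd : DenseRange Q := φ.surjective.denseRange.comp (denseRange_conj he hed) h.continuous
  have hPmul (x y : B) : P (x * (s * s) * y) = P x * P y := by simp only [hP, mul_assoc]
  have hQmul (x y : B) : Q (x * (s * s) * y) = Q x * Q y := by
    simp only [hQ, hse]
    rw [mul_assoc e y e, h.map_mul_mul_map_mul]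
    simp only [mul_assoc]
  have hPstar (x : B) : P (star x) = star (P x) := by
    simp only [hP, star_mul, hs.star_eq, mul_assoc]
  have hQstar (x : B) : Q (star x) = star (Q x) := by
    simp only [hQ, ← h.map_star, star_mul, he.star_eq, mul_assoc]
  simpa only [hP, hQ] using exists_starAlgEquiv_of_denseRange hPd hQd
    (by simpa only [hP, hQ] using h.exists_norm_map_conj_le he hs hse)
    (by simpa only [hP, hQ] using h.exists_norm_conj_le_map he hs hse)
    hPmul hQmul hPstar hQstar

end Compression

theorem denseRange_map_mul_left (h : IsNOrderIso 3 φ) {e : B} (he : 0 ≤ e)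
    (hd : DenseRange (e * · : B → B)) : DenseRange (φ e * · : A → A) := by
  let g := CFC.sqrt (φ e)
  have hgg : g * g = φ e := CFC.sqrt_mul_sqrt_self _ (h.isNPositive.map_nonneg he)
  have map_mul (b : B) : φ (e * b) = g * φ (φ.symm g * b) := by
    simpa only [hgg, LinearEquiv.symm_symm, φ.symm_apply_apply] using
      h.symm.symm_map_mul_mul g g b
  have hg : DenseRange (g * · : A → A) := by
    refine (φ.surjective.denseRange.comp hd h.continuous).mono ?_
    rintro _ ⟨b, rfl⟩
    exact ⟨_, (map_mul b).symm⟩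
  simpa only [hgg] using denseRange_mul_left_mul hg hg

theorem denseRange_symm_map_mul_map_mul_left (h : IsNOrderIso 3 φ) {e : B} (he : 0 ≤ e)
    (hd : DenseRange (e * · : B → B)) :
    DenseRange (φ.symm (φ e * φ e) * · : B → B) := by
  have := φ.symm.surjective.denseRange.comp
    ((h.denseRange_map_mul_left he hd).comp (φ.surjective.denseRange.comp hd h.continuous)
      (continuous_const_mul _)) h.symm.continuous
  simpa only [Function.comp_def, h.symm_mul_map_mul] using this

end Module

end IsNOrderIso

end CStarAlgebra

theorem stmt6_general {A B : Type*} [NonUnitalCStarAlgebra A] [NonUnitalCStarAlgebra B]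
    (hσ : ∃ e : B, (∃ f : B, e = star f * f) ∧ Dense (Set.range fun b : B => e * b))
    {φ : B ≃ₗ[ℂ] A} (h : IsNOrderIso 3 φ) : Nonempty (B ≃⋆ₐ[ℂ] A) := by
  let _ := CStarAlgebra.spectralOrder A
  let _ := CStarAlgebra.spectralOrder B
  have _ := CStarAlgebra.spectralOrderedRing A
  have _ := CStarAlgebra.spectralOrderedRing B
  obtain ⟨e, ⟨f, hf⟩, hd⟩ := hσ
  have he₀ : 0 ≤ e := hf ▸ star_mul_self_nonneg f
  have he : IsSelfAdjoint e := .of_nonneg he₀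
  have hφe : IsSelfAdjoint (φ e) := .of_nonneg (h.isNPositive.map_nonneg he₀)
  let s := CFC.sqrt (φ.symm (φ e * φ e))
  have hs : IsSelfAdjoint s := .of_nonneg (CFC.sqrt_nonneg _)
  have hse : s * s = φ.symm (φ e * φ e) :=
    CFC.sqrt_mul_sqrt_self _ (h.isNPositive_symm.map_nonneg hφe.mul_self_nonneg)
  have hsd : DenseRange (s * · : B → B) :=
    denseRange_mul_left_of_mul (hse ▸ h.denseRange_symm_map_mul_map_mul_left he₀ hd)
  obtain ⟨θ, -⟩ := h.exists_starAlgEquiv_conj he hs hse hd hsd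
  exact ⟨θ⟩

theorem stmt6 {A B : Type*} [NonUnitalCStarAlgebra A] [NonUnitalCStarAlgebra B]
    -- `B` is σ-unital
    (hσ : ∃ e : B, (∃ f : B, e = star f * f) ∧ Dense (Set.range fun b : B => e * b))
    -- `φ` is a complete order isomorphism from `B` onto `A`
    (φ : B ≃ₗ[ℂ] A)
    (hn : ∀ n : ℕ, 1 ≤ n →
      (∀ M : Matrix (Fin n) (Fin n) B,
        (∃ N : Matrix (Fin n) (Fin n) B, M = star N * N) →
        ∃ N' : Matrix (Fin n) (Fin n) A, M.map ⇑φ = star N' * N') ∧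
      (∀ M : Matrix (Fin n) (Fin n) A,
        (∃ N : Matrix (Fin n) (Fin n) A, M = star N * N) →
        ∃ N' : Matrix (Fin n) (Fin n) B, M.map ⇑φ.symm = star N' * N')) :
    -- `A` and `B` are ⋆-isomorphic
    Nonempty (B ≃⋆ₐ[ℂ] A) :=
  stmt6_general hσ ⟨(hn 3 (by norm_num)).1, (hn 3 (by norm_num)).2⟩
end

section
/- Let H be a complex Hilbert space and A ⊆ B(H) a nondegenerate σ-unital C*-subalgebra. If h ∈ B(H) satisfies h ≥ 0 and a h a' ∈ A for all a, a' ∈ A (h is a positive quasi-multiplier of A), then there exists T ∈ B(H) with TA ⊆ A (T is a left multiplier of A) and T*T = h. -/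
open ContinuousLinearMap

variable {H : Type*} [NormedAddCommGroup H] [InnerProductSpace ℂ H] [CompleteSpace H]

/-!
Let `e` be a strictly positive element of `A`; nondegeneracy makes its range dense in `H`. The
positive operator `e* h e` lies in `A`, hence so does its square root `r`, and from
`‖r x‖² = ⟪e x, h (e x)⟫ ≤ ‖h‖ ‖e x‖²` it follows that `e x ↦ r x` extends to a bounded operator `T`
with `T e = r`. Since `e* (T* T) e = r* r = e* h e`, density of the range of `e` gives `T* T = h`,
and `T A ⊆ closure (T e A) = closure (r A) ⊆ A`.
-/

open scoped InnerProductSpace InnerProduct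

theorem mul_mem_of_subset_closure_mul {M σ : Type*} [Semigroup M] [TopologicalSpace M]
    [SeparatelyContinuousMul M] [SetLike σ M] [MulMemClass σ M] {S : σ}
    (hS : IsClosed (S : Set M)) {e t : M}
    (he : (S : Set M) ⊆ closure {y | ∃ a ∈ S, y = e * a}) (hte : t * e ∈ S) :
    ∀ a ∈ S, t * a ∈ S := by
  intro a ha
  rw [← SetLike.mem_coe, ← hS.closure_eq]
  refine map_mem_closure (continuous_const_mul t) (he ha) ?_
  rintro _ ⟨b, hb, rfl⟩
  rw [← mul_assoc]
  exact mul_mem hte hb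

theorem cfcSqrt_mem {B : Type*} [NonUnitalCStarAlgebra B] [PartialOrder B] [StarOrderedRing B]
    {A : NonUnitalStarSubalgebra ℂ B} (hA : IsClosed (A : Set B)) {b : B} (hb : b ∈ A) :
    CFC.sqrt b ∈ A := by
  by_cases hb₀ : 0 ≤ b
  · rw [CFC.sqrt_eq_real_sqrt b hb₀]
    exact cfcₙ_mem (𝕜' := ℂ) (hs := hA) _ hb
  · rw [CFC.sqrt_of_not_nonneg hb₀]
    exact zero_mem A

section DenseRange

variable {𝕜 E F G : Type*} [NontriviallyNormedField 𝕜]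
  [SeminormedAddCommGroup E] [NormedSpace 𝕜 E] [SeminormedAddCommGroup F] [NormedSpace 𝕜 F]
  [SeminormedAddCommGroup G] [NormedSpace 𝕜 G]

theorem apply_mem_closure_range_of_mem_closure {e : F →L[𝕜] G} {a : E →L[𝕜] G}
    (ha : a ∈ closure (Set.range fun b : E →L[𝕜] F => e ∘L b)) (ξ : E) :
    a ξ ∈ closure (Set.range e) := by
  refine map_mem_closure (f := fun b : E →L[𝕜] G => b ξ) (by fun_prop) ha ?_
  rintro _ ⟨b, rfl⟩
  exact Set.mem_range_self (b ξ)

theorem denseRange_of_subset_closure_range_comp {S : Set (E →L[𝕜] G)} {e : F →L[𝕜] G}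
    (hS : Dense (Submodule.span 𝕜 {v : G | ∃ a ∈ S, ∃ ξ : E, a ξ = v} : Set G))
    (he : S ⊆ closure (Set.range fun b : E →L[𝕜] F => e ∘L b)) :
    DenseRange e := by
  have hspan : Submodule.span 𝕜 {v : G | ∃ a ∈ S, ∃ ξ : E, a ξ = v} ≤
      e.range.topologicalClosure := by
    rw [Submodule.span_le]
    rintro _ ⟨a, ha, ξ, rfl⟩
    exact apply_mem_closure_range_of_mem_closure (he ha) ξ
  exact dense_closure.1 (hS.mono hspan)

end DenseRange

section Adjoint

variable {𝕜 E F G : Type*} [RCLike 𝕜]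
  [NormedAddCommGroup E] [InnerProductSpace 𝕜 E] [CompleteSpace E]
  [NormedAddCommGroup F] [InnerProductSpace 𝕜 F] [CompleteSpace F]
  [NormedAddCommGroup G] [InnerProductSpace 𝕜 G] [CompleteSpace G]

theorem eq_of_adjoint_comp_comp_eq {e : E →L[𝕜] F} (he : DenseRange e) {g h : F →L[𝕜] F}
    (hgh : e† ∘L g ∘L e = e† ∘L h ∘L e) : g = h := by
  have inner_eq (x y : F) : ⟪x, g y⟫_𝕜 = ⟪x, h y⟫_𝕜 := by
    refine he.induction_on₂ (p := fun x y => ⟪x, g y⟫_𝕜 = ⟪x, h y⟫_𝕜)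
      (isClosed_eq (by fun_prop) (by fun_prop)) (fun u v => ?_) x y
    simpa only [comp_apply, adjoint_inner_right] using congr(⟪u, $hgh v⟫_𝕜)
  exact ContinuousLinearMap.ext fun y => ext_inner_left 𝕜 fun x => inner_eq x y

theorem norm_apply_le_of_adjoint_comp_self_eq {e : E →L[𝕜] F} {r : E →L[𝕜] G} {h : F →L[𝕜] F}
    (hr : r† ∘L r = e† ∘L h ∘L e) (x : E) : ‖r x‖ ≤ √‖h‖ * ‖e x‖ := by
  refine le_of_sq_le_sq ?_ (by positivity)
  calc
    ‖r x‖ ^ 2 = RCLike.re ⟪e x, h (e x)⟫_𝕜 := by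
      rw [apply_norm_sq_eq_inner_adjoint_right, hr, comp_apply, comp_apply, adjoint_inner_right]
    _ ≤ ‖e x‖ * ‖h (e x)‖ := re_inner_le_norm _ _
    _ ≤ ‖e x‖ * (‖h‖ * ‖e x‖) := by gcongr; exact h.le_opNorm _
    _ = (√‖h‖ * ‖e x‖) ^ 2 := by rw [mul_pow, Real.sq_sqrt (norm_nonneg h)]; ring

theorem exists_comp_eq_and_adjoint_comp_self_eq {e : E →L[𝕜] F} (he : DenseRange e)
    {r : E →L[𝕜] G} {h : F →L[𝕜] F} (hr : r† ∘L r = e† ∘L h ∘L e) :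
    ∃ T : F →L[𝕜] G, T ∘L e = r ∧ T† ∘L T = h := by
  let T : F →L[𝕜] G := r.toLinearMap.extendOfNorm e.toLinearMap
  have hTe : T ∘L e = r := ContinuousLinearMap.ext fun x =>
    LinearMap.extendOfNorm_eq he ⟨_, norm_apply_le_of_adjoint_comp_self_eq hr⟩ x
  refine ⟨T, hTe, eq_of_adjoint_comp_comp_eq he ?_⟩
  calc
    e† ∘L (T† ∘L T) ∘L e = (T ∘L e)† ∘L (T ∘L e) := by simp only [adjoint_comp, comp_assoc]
    _ = e† ∘L h ∘L e := by rw [hTe, hr]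

end Adjoint

theorem stmt9
    (A : NonUnitalStarSubalgebra ℂ (H →L[ℂ] H))
    (hAc : IsClosed (A : Set (H →L[ℂ] H)))
    -- `A` is nondegenerate
    (hnd : Dense (Submodule.span ℂ {v : H | ∃ a ∈ A, ∃ ξ : H, a ξ = v} : Set H))
    -- `A` is σ-unital
    (hσ : ∃ e ∈ A, 0 ≤ e ∧
      (A : Set (H →L[ℂ] H)) ⊆ closure {y : H →L[ℂ] H | ∃ a ∈ A, y = e * a})
    -- `h` is a positive quasi-multiplier of `A`
    (h : H →L[ℂ] H) (hpos : 0 ≤ h)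
    (hqm : ∀ a ∈ A, ∀ a' ∈ A, a * h * a' ∈ A) :
    ∃ T : H →L[ℂ] H, (∀ a ∈ A, T * a ∈ A) ∧ star T * T = h := by
  obtain ⟨e, heA, -, heA_dense⟩ := hσ
  have he : DenseRange e := denseRange_of_subset_closure_range_comp hnd <|
    heA_dense.trans <| closure_mono fun _ ⟨b, _, hb⟩ => ⟨b, hb.symm⟩
  let r : H →L[ℂ] H := CFC.sqrt (star e * h * e)
  have hrA : r ∈ A := cfcSqrt_mem hAc (hqm _ (star_mem heA) _ heA)
  have hr : star r * r = star e * (h * e) := by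
    rw [(CFC.sqrt_nonneg _).isSelfAdjoint.star_eq,
      CFC.sqrt_mul_sqrt_self _ (star_left_conjugate_nonneg hpos e), mul_assoc]
  obtain ⟨T, hTe, hT⟩ := exists_comp_eq_and_adjoint_comp_self_eq he hr
  have hTeA : T * e ∈ A := by rwa [mul_def, hTe]
  exact ⟨T, mul_mem_of_subset_closure_mul hAc heA_dense hTeA, hT⟩
end
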